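/- Let m > 1, n ≥ 1, λ = ((m−1)n + 2)^{−1}, C₁ > 0 and x* ∈ ℝ^n. Set C = a^{λ/2}, U(x,t) = ( C(t+1)^{2λ} − (λ/2)|x|² ) / (t+1), c(t) = √C (t+1)^{λ−1}, and Ũ(x,t) = U(x − x*, t) − 2C₁ a ∫₀^t c(s) ds. Then there exists a₁ > 0, depending only on m, n and C₁, such that for all 0 < a < a₁ and all x with |x − x*| ≤ 3, one has Ũ(x, a^{−1} − 1/2) ≥ a^{1−λ}. -/

import Mathlib

open Real MeasureTheory Metric Set Filter
open scoped RealInnerProductSpace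

/-- The spatial Laplacian of a function on `ℝⁿ`, as a sum of second partial derivatives. -/
noncomputable def lapl {n : ℕ} (f : EuclideanSpace ℝ (Fin n) → ℝ)
    (x : EuclideanSpace ℝ (Fin n)) : ℝ :=
  ∑ i : Fin n, fderiv ℝ (fun y => fderiv ℝ f y (EuclideanSpace.single i 1)) x
    (EuclideanSpace.single i 1)

/-!
At time `t = a⁻¹ - 1/2` the quantity `t + 1` lies between `a⁻¹` and `2a⁻¹`. Hence the centre value
of the Barenblatt pressure is at least `a ^ (1 - 3λ/2) / 2`, while on a fixed ball the quadratic
correction is `O(a)` and the accumulated drift is `O(a ^ (1 - 3λ/4))`. Since `λ > 0`, the exponent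
`1 - 3λ/2` is the smallest, so the centre value dominates the two errors together with the target
`a ^ (1 - λ)` as `a → 0⁺`.
-/

open Asymptotics
open scoped Topology

section Barenblatt

variable {E : Type*} [SeminormedAddCommGroup E] {lam C C₁ R a t : ℝ}

/-- The Barenblatt pressure `U` with parameters `λ` and `C` and time origin `t = -1`. It is not
truncated at `0`: outside the ball of radius `√(2C/λ) (t + 1) ^ λ` it is the smooth extension by
negative values. -/
noncomputable def barenblattPressure (lam C : ℝ) (y : E) (t : ℝ) : ℝ :=
  (C * (t + 1) ^ (2 * lam) - lam / 2 * ‖y‖ ^ 2) / (t + 1)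

/-- The speed scale `c(t)` of the Barenblatt pressure: the free boundary
`|y| = √(2C/λ) (t + 1) ^ λ` moves at speed `√(2λ) c(t)`. -/
noncomputable def barenblattSpeed (lam C t : ℝ) : ℝ :=
  √C * (t + 1) ^ (lam - 1)

/-- The barrier `Ũ`: the Barenblatt pressure centred at `xs` with `C = a ^ (λ/2)`, lowered by the
drift error accumulated up to time `t`. -/
noncomputable def loweredBarenblatt (lam C₁ a : ℝ) (xs x : E) (t : ℝ) : ℝ :=
  barenblattPressure lam (a ^ (lam / 2)) (x - xs) t -
    2 * C₁ * a * ∫ s in (0 : ℝ)..t, barenblattSpeed lam (a ^ (lam / 2)) s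

theorem integral_barenblattSpeed (hlam : 0 < lam) (C t : ℝ) :
    ∫ s in (0 : ℝ)..t, barenblattSpeed lam C s = √C * (((t + 1) ^ lam - 1) / lam) := by
  simp only [barenblattSpeed]
  rw [intervalIntegral.integral_const_mul,
    intervalIntegral.integral_comp_add_right (fun u => u ^ (lam - 1)) 1,
    integral_rpow (Or.inl (by linarith)), zero_add, sub_add_cancel, one_rpow]

theorem integral_barenblattSpeed_le (hlam : 0 < lam) (ha : 0 < a) (ht : 0 ≤ t + 1)
    (hta : t + 1 ≤ 2 * a⁻¹) :
    ∫ s in (0 : ℝ)..t, barenblattSpeed lam C s ≤ 2 ^ lam / lam * (√C * a ^ (-lam)) := by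
  have hpow : (t + 1) ^ lam ≤ 2 ^ lam * a ^ (-lam) :=
    calc (t + 1) ^ lam ≤ (2 * a⁻¹) ^ lam := rpow_le_rpow ht hta hlam.le
      _ = 2 ^ lam * a ^ (-lam) := by
        rw [mul_rpow two_pos.le (inv_pos.2 ha).le, inv_rpow ha.le, rpow_neg ha.le]
  calc ∫ s in (0 : ℝ)..t, barenblattSpeed lam C s
      = √C * (((t + 1) ^ lam - 1) / lam) := integral_barenblattSpeed hlam C t
    _ ≤ √C * (2 ^ lam * a ^ (-lam) / lam) := by gcongr; linarith
    _ = 2 ^ lam / lam * (√C * a ^ (-lam)) := by ring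

theorem le_barenblattPressure (hlam : 0 ≤ lam) (hC : 0 ≤ C) (ha : 0 < a) (hat : a⁻¹ ≤ t + 1)
    (hta : t + 1 ≤ 2 * a⁻¹) {y : E} (hy : ‖y‖ ≤ R) :
    C * a ^ (1 - 2 * lam) / 2 - lam / 2 * R ^ 2 * a ≤ barenblattPressure lam C y t := by
  have ht : 0 < t + 1 := (inv_pos.2 ha).trans_le hat
  have hinv_ge : a / 2 ≤ (t + 1)⁻¹ := by
    simpa [div_eq_inv_mul, mul_comm] using inv_anti₀ ht hta
  have hinv_le : (t + 1)⁻¹ ≤ a := inv_le_of_inv_le₀ ha hat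
  have hpow : a ^ (-(2 * lam)) ≤ (t + 1) ^ (2 * lam) :=
    calc a ^ (-(2 * lam)) = a⁻¹ ^ (2 * lam) := by rw [inv_rpow ha.le, rpow_neg ha.le]
      _ ≤ (t + 1) ^ (2 * lam) := by gcongr
  calc C * a ^ (1 - 2 * lam) / 2 - lam / 2 * R ^ 2 * a
      = C * a ^ (-(2 * lam)) * (a / 2) - lam / 2 * R ^ 2 * a := by
        rw [show 1 - 2 * lam = -(2 * lam) + 1 by ring, rpow_add_one ha.ne']; ring
    _ ≤ C * (t + 1) ^ (2 * lam) * (t + 1)⁻¹ - lam / 2 * ‖y‖ ^ 2 * (t + 1)⁻¹ := by gcongr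
    _ = barenblattPressure lam C y t := by rw [barenblattPressure]; ring

theorem le_loweredBarenblatt (hlam : 0 < lam) (hC₁ : 0 ≤ C₁) (ha : 0 < a) (hat : a⁻¹ ≤ t + 1)
    (hta : t + 1 ≤ 2 * a⁻¹) {xs x : E} (hx : ‖x - xs‖ ≤ R) :
    a ^ (1 - 3 / 2 * lam) / 2 -
        (lam / 2 * R ^ 2 * a + 2 * C₁ * (2 ^ lam / lam) * a ^ (1 - 3 / 4 * lam)) ≤
      loweredBarenblatt lam C₁ a xs x t := by
  have hpressure := le_barenblattPressure hlam.le (rpow_nonneg ha.le (lam / 2)) ha hat hta hx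
  have hmain : a ^ (lam / 2) * a ^ (1 - 2 * lam) = a ^ (1 - 3 / 2 * lam) := by
    rw [← rpow_add ha]; ring_nf
  have hdrift_pow : a * (√(a ^ (lam / 2)) * a ^ (-lam)) = a ^ (1 - 3 / 4 * lam) := by
    rw [sqrt_eq_rpow, ← rpow_mul ha.le, ← rpow_add ha, mul_comm, ← rpow_add_one ha.ne']
    ring_nf
  have hdrift : 2 * C₁ * a * ∫ s in (0 : ℝ)..t, barenblattSpeed lam (a ^ (lam / 2)) s ≤
      2 * C₁ * (2 ^ lam / lam) * a ^ (1 - 3 / 4 * lam) :=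
    calc 2 * C₁ * a * ∫ s in (0 : ℝ)..t, barenblattSpeed lam (a ^ (lam / 2)) s
        ≤ 2 * C₁ * a * (2 ^ lam / lam * (√(a ^ (lam / 2)) * a ^ (-lam))) := by
          gcongr
          exact integral_barenblattSpeed_le hlam ha ((inv_pos.2 ha).le.trans hat) hta
      _ = 2 * C₁ * (2 ^ lam / lam) * a ^ (1 - 3 / 4 * lam) := by rw [← hdrift_pow]; ring
  rw [hmain] at hpressure
  rw [loweredBarenblatt]
  linarith

end Barenblatt

theorem isLittleO_rpow_rpow_nhdsGT_zero {p q : ℝ} (hpq : p < q) :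
    (fun a : ℝ => a ^ q) =o[𝓝[>] 0] fun a => a ^ p := by
  have hpos : ∀ᶠ a : ℝ in 𝓝[>] 0, 0 < a := self_mem_nhdsWithin
  have hlim : Tendsto (fun a : ℝ => a ^ (q - p)) (𝓝[>] 0) (𝓝 0) := by
    simpa [zero_rpow (sub_pos.2 hpq).ne'] using
      (continuousAt_rpow_const 0 (q - p) (Or.inr (sub_pos.2 hpq).le)).tendsto.mono_left
        nhdsWithin_le_nhds
  refine isLittleO_of_tendsto' (hpos.mono fun a ha h => absurd h (rpow_pos_of_pos ha p).ne') ?_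
  exact hlim.congr' (hpos.mono fun a ha => rpow_sub ha q p)

theorem eventually_rpow_add_le_half_rpow {p q₁ q₂ q₃ : ℝ} (h₁ : p < q₁) (h₂ : p < q₂)
    (h₃ : p < q₃) (A B : ℝ) :
    ∀ᶠ a : ℝ in 𝓝[>] 0, a ^ q₁ + (A * a ^ q₂ + B * a ^ q₃) ≤ a ^ p / 2 := by
  have hsmall : (fun a : ℝ => a ^ q₁ + (A * a ^ q₂ + B * a ^ q₃)) =o[𝓝[>] 0] fun a => a ^ p :=
    (isLittleO_rpow_rpow_nhdsGT_zero h₁).add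
      (((isLittleO_rpow_rpow_nhdsGT_zero h₂).const_mul_left A).add
        ((isLittleO_rpow_rpow_nhdsGT_zero h₃).const_mul_left B))
  filter_upwards [hsmall.bound one_half_pos, self_mem_nhdsWithin] with a hbound ha
  rw [norm_of_nonneg (rpow_nonneg (mem_Ioi.1 ha).le p)] at hbound
  linarith [(le_norm_self _).trans hbound]

theorem lowered_barenblatt_final_lower_bound_general {E : Type*} [SeminormedAddCommGroup E]
    {lam C₁ : ℝ} (hlam : 0 < lam) (hC₁ : 0 ≤ C₁) (R : ℝ) :
    ∀ᶠ a : ℝ in 𝓝[>] 0, ∀ xs x : E, ‖x - xs‖ ≤ R →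
      a ^ (1 - lam) ≤ loweredBarenblatt lam C₁ a xs x (a⁻¹ - 1 / 2) := by
  have hdominate := eventually_rpow_add_le_half_rpow (p := 1 - 3 / 2 * lam) (q₁ := 1 - lam)
    (q₂ := 1) (q₃ := 1 - 3 / 4 * lam) (by linarith) (by linarith) (by linarith)
    (lam / 2 * R ^ 2) (2 * C₁ * (2 ^ lam / lam))
  filter_upwards [hdominate, Ioo_mem_nhdsGT one_pos] with a hpow ⟨ha, ha_one⟩ xs x hx
  have hinv : 1 < a⁻¹ := (one_lt_inv₀ ha).2 ha_one
  have hlower := le_loweredBarenblatt (t := a⁻¹ - 1 / 2) hlam hC₁ ha (by linarith) (by linarith) hx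
  rw [rpow_one] at hpow
  linarith

/-- **Lower bound for the lowered Barenblatt barrier at the final time.** There is
`a₁ > 0` (depending only on `m`, `n`, `C₁`) so that for all `0 < a < a₁`, the lowered
Barenblatt profile `Ũ` satisfies `Ũ(x, a⁻¹ − 1/2) ≥ a^{1−λ}` on `{|x − x*| ≤ 3}`. -/
theorem lowered_barenblatt_final_lower_bound
    {n : ℕ} (hn : 1 ≤ n) (m : ℝ) (hm : 1 < m)
    (lam C₁ : ℝ) (hlam : lam = ((m - 1) * n + 2)⁻¹) (hC₁ : 0 < C₁)
    (xs : EuclideanSpace ℝ (Fin n)) :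
    ∃ a₁ : ℝ, 0 < a₁ ∧
      ∀ a : ℝ, 0 < a → a < a₁ →
        ∀ (U : EuclideanSpace ℝ (Fin n) → ℝ → ℝ) (c : ℝ → ℝ)
          (Ut : EuclideanSpace ℝ (Fin n) → ℝ → ℝ),
          (∀ x t, U x t =
            (a ^ (lam / 2) * (t + 1) ^ (2 * lam) - lam / 2 * ‖x‖ ^ 2) / (t + 1)) →
          (∀ t, c t = Real.sqrt (a ^ (lam / 2)) * (t + 1) ^ (lam - 1)) →
          (∀ x t, Ut x t = U (x - xs) t - 2 * C₁ * a * ∫ s in (0 : ℝ)..t, c s) →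
          ∀ x : EuclideanSpace ℝ (Fin n), ‖x - xs‖ ≤ 3 →
            Ut x (a⁻¹ - 1 / 2) ≥ a ^ (1 - lam) := by
  have hlam_pos : 0 < lam := by
    have : 0 < m - 1 := sub_pos.2 hm
    rw [hlam]
    positivity
  obtain ⟨a₁, ha₁, hbound⟩ := (nhdsGT_basis (0 : ℝ)).eventually_iff.1
    (lowered_barenblatt_final_lower_bound_general (E := EuclideanSpace ℝ (Fin n))
      hlam_pos hC₁.le 3)
  refine ⟨a₁, ha₁, fun a ha ha_lt U c Ut hU hc hUt x hx => ?_⟩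
  simpa only [hUt, hU, hc, loweredBarenblatt, barenblattPressure, barenblattSpeed] using
    hbound ⟨ha, ha_lt⟩ xs x hx
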